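/- arXiv:2105.11674 — 7 statements merged into one kernel-verified Lean document; each statement's English description precedes it below -/
import Mathlib

section
/- For every n, every history h, and any belief b satisfying the Bayes recursion, the n-step history value equals the belief-expectation of the n-step history-state value: VH n h = Σ_s b h s * V n h s. (Finite-horizon form of the paper's Theorem 4: the history-state value is an unbiased estimate of the history value, v^π(h) = E_{s∼b(h)}[v^π(h,s)].) -/
/-!
By the tower property, averaging a function of the next state and observation over the current
state and then over the transition is the same as averaging over the next state for each
observation, with weight the joint probability of the two. Bayes' rule writes that joint
probability as the posterior times the probability of the observation. So the expected
continuation value at the belief of `h` is the average, over the observations, of the expected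
values at the updated beliefs, and induction on the horizon applies.
-/

section BayesUpdate

variable {K S S' O : Type*} [CommSemiring K] [Fintype S]

/-- The joint weight of the next state `s'` and the observation `o`, for current states distributed
according to `β`, transition weights `T` and observation weights `Z`. The weights need not be
normalized, and the action is taken to be already fixed in `T`. -/
def nextStateObservationWeight (β : S → K) (T : S → S' → K) (Z : S' → O → K)
    (o : O) (s' : S') : K :=
  ∑ s, β s * T s s' * Z s' o

/-- The weight of the observation `o`: the `P(o | h, a)` of a POMDP when `β` is the belief at `h`
and `T` is the transition kernel of the action `a`. -/
def observationWeight [Fintype S'] (β : S → K) (T : S → S' → K) (Z : S' → O → K) (o : O) : K :=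
  ∑ s, ∑ s', β s * T s s' * Z s' o

/-- Bayes' rule for the belief `β'` held after observing `o` from the prior `β`. It is stated
without division, so `β'` is unconstrained at an observation of weight zero. -/
def IsBayesPosterior [Fintype S'] (β : S → K) (T : S → S' → K) (Z : S' → O → K) (o : O)
    (β' : S' → K) : Prop :=
  ∀ s', β' s' * observationWeight β T Z o = nextStateObservationWeight β T Z o s'

theorem IsBayesPosterior.observationWeight_mul_sum [Fintype S'] {β : S → K} {T : S → S' → K}
    {Z : S' → O → K} {o : O} {β' : S' → K} (hβ' : IsBayesPosterior β T Z o β') (f : S' → K) :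
    observationWeight β T Z o * ∑ s', β' s' * f s' =
      ∑ s', nextStateObservationWeight β T Z o s' * f s' := by
  simp only [Finset.mul_sum, ← hβ' _, mul_left_comm, mul_assoc]

theorem sum_nextStateObservationWeight_mul [Fintype S'] [Fintype O] (β : S → K) (T : S → S' → K)
    (Z : S' → O → K) (f : O → S' → K) :
    ∑ o, ∑ s', nextStateObservationWeight β T Z o s' * f o s' =
      ∑ s, β s * ∑ s', T s s' * ∑ o, Z s' o * f o s' := by
  calc
    _ = ∑ o, ∑ s', ∑ s, β s * T s s' * Z s' o * f o s' := by
      simp only [nextStateObservationWeight, Finset.sum_mul]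
    _ = ∑ s', ∑ s, ∑ o, β s * T s s' * Z s' o * f o s' := by
      rw [Finset.sum_comm]
      exact Finset.sum_congr rfl fun _ _ => Finset.sum_comm
    _ = ∑ s, ∑ s', ∑ o, β s * T s s' * Z s' o * f o s' := Finset.sum_comm
    _ = _ := by simp only [Finset.mul_sum, mul_assoc]

theorem sum_observationWeight_mul_sum_posterior_mul [Fintype S'] [Fintype O] {β : S → K}
    {T : S → S' → K} {Z : S' → O → K} {β' : O → S' → K}
    (hβ' : ∀ o, IsBayesPosterior β T Z o (β' o)) (f : O → S' → K) :
    ∑ o, observationWeight β T Z o * ∑ s', β' o s' * f o s' =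
      ∑ s, β s * ∑ s', T s s' * ∑ o, Z s' o * f o s' := by
  simp only [(hβ' _).observationWeight_mul_sum, sum_nextStateObservationWeight_mul]

end BayesUpdate

theorem sum_policy_mul_belief_sum_add {K S A : Type*} [CommSemiring K] [Fintype S] [Fintype A]
    (p : A → K) (β : S → K) (γ : K) (r f : S → A → K) :
    ∑ a, p a * ((∑ s, β s * r s a) + γ * ∑ s, β s * f s a) =
      ∑ s, β s * ∑ a, p a * (r s a + γ * f s a) := by
  calc
    _ = ∑ a, ∑ s, β s * (p a * (r s a + γ * f s a)) := by
      refine Finset.sum_congr rfl fun a _ => ?_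
      rw [Finset.mul_sum, ← Finset.sum_add_distrib, Finset.mul_sum]
      exact Finset.sum_congr rfl fun s _ => by ring
    _ = _ := by rw [Finset.sum_comm]; simp only [Finset.mul_sum]

-- `H` may be any space of memory states, with `next h a o` the update of `h` after `a` and `o`.
theorem history_value_eq_belief_expectation_of_history_state_value_general
    {K S A O H : Type*} [CommSemiring K] [Fintype S] [Fintype A] [Fintype O]
    (next : H → A → O → H) (T : S → A → S → K) (Z : S → O → K) (R : S → A → K) (γ : K)
    (π : H → A → K) (b : H → S → K)
    (hb : ∀ h a o, IsBayesPosterior (b h) (fun s => T s a) Z o (b (next h a o)))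
    (V : ℕ → H → S → K) (hV0 : ∀ h s, V 0 h s = 0)
    (hV : ∀ n h s, V (n + 1) h s =
      ∑ a, π h a * (R s a + γ * ∑ s', T s a s' * ∑ o, Z s' o * V n (next h a o) s'))
    (VH : ℕ → H → K) (hVH0 : ∀ h, VH 0 h = 0)
    (hVH : ∀ n h, VH (n + 1) h =
      ∑ a, π h a * ((∑ s, b h s * R s a) +
        γ * ∑ o, observationWeight (b h) (fun s => T s a) Z o * VH n (next h a o)))
    (n : ℕ) (h : H) : VH n h = ∑ s, b h s * V n h s := by
  induction n generalizing h with
  | zero => simp [hV0, hVH0]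
  | succ n ih =>
    have continuation_value (a : A) :
        ∑ o, observationWeight (b h) (fun s => T s a) Z o * VH n (next h a o) =
          ∑ s, b h s * ∑ s', T s a s' * ∑ o, Z s' o * V n (next h a o) s' := by
      simp only [ih]
      exact sum_observationWeight_mul_sum_posterior_mul (hb h a) fun o => V n (next h a o)
    simp only [hVH, hV, continuation_value, sum_policy_mul_belief_sum_add]

/-- Finite-horizon form of Theorem 4: the history value equals the
belief-expectation of the history-state value. -/
theorem history_value_eq_belief_expectation_of_history_state_value
    {S A O : Type*} [Fintype S] [Fintype A] [Fintype O]
    [Nonempty S] [Nonempty A] [Nonempty O]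
    (T : S → A → PMF S) (Z : S → PMF O) (R : S → A → ℝ)
    (γ : ℝ) (hγ0 : 0 ≤ γ) (hγ1 : γ < 1)
    (π : List (A × O) → PMF A)
    (b : List (A × O) → PMF S)
    (hb : ∀ (h : List (A × O)) (a : A) (o : O) (s' : S),
      (b (h ++ [(a, o)]) s').toReal *
        (∑ s : S, ∑ t : S, (b h s).toReal * (T s a t).toReal * (Z t o).toReal)
      = ∑ s : S, (b h s).toReal * (T s a s').toReal * (Z s' o).toReal)
    (V : ℕ → List (A × O) → S → ℝ)
    (hV0 : ∀ h s, V 0 h s = 0)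
    (hV : ∀ n h s, V (n + 1) h s =
      ∑ a : A, (π h a).toReal *
        (R s a + γ * ∑ s' : S, (T s a s').toReal *
          ∑ o : O, (Z s' o).toReal * V n (h ++ [(a, o)]) s'))
    (VH : ℕ → List (A × O) → ℝ)
    (hVH0 : ∀ h, VH 0 h = 0)
    (hVH : ∀ n h, VH (n + 1) h =
      ∑ a : A, (π h a).toReal *
        ((∑ s : S, (b h s).toReal * R s a) +
          γ * ∑ o : O,
            (∑ s : S, ∑ s' : S,
              (b h s).toReal * (T s a s').toReal * (Z s' o).toReal) *
            VH n (h ++ [(a, o)]))) :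
    ∀ (n : ℕ) (h : List (A × O)),
      VH n h = ∑ s : S, (b h s).toReal * V n h s := by
  exact history_value_eq_belief_expectation_of_history_state_value_general
    (fun h a o => h ++ [(a, o)]) (fun s a s' => (T s a s').toReal) (fun s o => (Z s o).toReal) R γ
    (fun h a => (π h a).toReal) (fun h s => (b h s).toReal) hb V hV0 hV VH hVH0 hVH
end

section
/- For every n, every history h, and every action a, and any belief b satisfying the Bayes recursion, the history action-value equals the belief-expectation of the history-state action-value: QH n h a = Σ_s b h s * QHS n h s a. (The key identity Q^π(h,a) = E_{s∼b(h)}[Q^π(h,s,a)] proved inside the paper's Theorem 5.) -/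
/-!
The Bayes recursion says that the weight `P(o | h, a)` times the updated belief is the joint weight
of the successor state and `o`. Hence, if the history value is the belief expectation of the
history-state value after every one-step extension of `h`, then weighting it by `P(o | h, a)` and
summing over `o` gives the expectation of the continuation value over `s`, `s'` and `o`: the factor
`P(o | h, a)` is absorbed without ever being divided by. One Bellman backup therefore preserves the
relation between the two values, and induction on the horizon concludes.
-/

/-- A finite partially observable decision process with states `S`, actions `A`, observations `O`
and agent memory `H`; histories are the case `H = List (A × O)` with `update` appending. The weights
lie in `K` and need not be normalised, and the observation weight `obs s a s' o` may depend on the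
whole transition. -/
structure WeightedPOMDP (K S A O H : Type*) where
  trans : S → A → S → K
  obs : S → A → S → O → K
  reward : S → A → K
  discount : K
  update : H → A → O → H

namespace WeightedPOMDP

variable {K S A O H : Type*} [CommSemiring K] [Fintype S]

/-- The predictive weight `P(o | β, a)` of observing `o` after playing `a` from the belief `β`. -/
def obsWeight (M : WeightedPOMDP K S A O H) (β : S → K) (a : A) (o : O) : K :=
  ∑ s, ∑ s', β s * M.trans s a s' * M.obs s a s' o

/-- The Bayes recursion for a belief `b`, in multiplied-out form: it leaves the updated belief
unconstrained after observations of weight zero. -/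
def IsBelief (M : WeightedPOMDP K S A O H) (b : H → S → K) : Prop :=
  ∀ h a o s', b (M.update h a o) s' * M.obsWeight (b h) a o =
    ∑ s, b h s * M.trans s a s' * M.obs s a s' o

/-- The history-state action-value obtained by one Bellman backup of the continuation value `v`. -/
def stateActionBackup [Fintype O] (M : WeightedPOMDP K S A O H) (v : H → S → K)
    (h : H) (s : S) (a : A) : K :=
  M.reward s a + M.discount * ∑ s', M.trans s a s' * ∑ o, M.obs s a s' o * v (M.update h a o) s'

/-- The history action-value obtained by one Bellman backup of the continuation value `w`, with
rewards and observations averaged under the belief `b`. -/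
def historyActionBackup [Fintype O] (M : WeightedPOMDP K S A O H) (b : H → S → K) (w : H → K)
    (h : H) (a : A) : K :=
  (∑ s, b h s * M.reward s a) + M.discount * ∑ o, M.obsWeight (b h) a o * w (M.update h a o)

variable {M : WeightedPOMDP K S A O H} {b : H → S → K}

theorem IsBelief.obsWeight_mul_sum_update (hb : M.IsBelief b) (h : H) (a : A) (o : O) (f : S → K) :
    M.obsWeight (b h) a o * ∑ s', b (M.update h a o) s' * f s' =
      ∑ s', (∑ s, b h s * M.trans s a s' * M.obs s a s' o) * f s' := by
  rw [Finset.mul_sum]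
  refine Finset.sum_congr rfl fun s' _ => ?_
  rw [← hb h a o s', mul_left_comm, mul_assoc, mul_left_comm]

variable [Fintype O]

theorem IsBelief.sum_obsWeight_mul_sum_update (hb : M.IsBelief b) (h : H) (a : A) (f : O → S → K) :
    ∑ o, M.obsWeight (b h) a o * ∑ s', b (M.update h a o) s' * f o s' =
      ∑ s, b h s * ∑ s', M.trans s a s' * ∑ o, M.obs s a s' o * f o s' := by
  calc
    _ = ∑ o, ∑ s', ∑ s, b h s * M.trans s a s' * M.obs s a s' o * f o s' := by
      simp only [hb.obsWeight_mul_sum_update, Finset.sum_mul]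
    _ = ∑ s', ∑ o, ∑ s, b h s * M.trans s a s' * M.obs s a s' o * f o s' := Finset.sum_comm
    _ = ∑ s', ∑ s, ∑ o, b h s * M.trans s a s' * M.obs s a s' o * f o s' :=
      Finset.sum_congr rfl fun _ _ => Finset.sum_comm
    _ = ∑ s, ∑ s', ∑ o, b h s * M.trans s a s' * M.obs s a s' o * f o s' := Finset.sum_comm
    _ = _ := by simp only [Finset.mul_sum, mul_assoc]

theorem IsBelief.historyActionBackup_eq_sum (hb : M.IsBelief b) {v : H → S → K} {w : H → K}
    (hw : ∀ h, w h = ∑ s, b h s * v h s) (h : H) (a : A) :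
    M.historyActionBackup b w h a = ∑ s, b h s * M.stateActionBackup v h s a := by
  simp only [historyActionBackup, stateActionBackup, hw, hb.sum_obsWeight_mul_sum_update, mul_add,
    Finset.sum_add_distrib, mul_left_comm _ M.discount, ← Finset.mul_sum]

theorem IsBelief.historyValue_eq_sum [Fintype A] (hb : M.IsBelief b) {π : H → A → K}
    {V : ℕ → H → S → K} {VH : ℕ → H → K}
    (h_zero : ∀ h, VH 0 h = ∑ s, b h s * V 0 h s)
    (hV : ∀ n h s, V (n + 1) h s = ∑ a, π h a * M.stateActionBackup (V n) h s a)
    (hVH : ∀ n h, VH (n + 1) h = ∑ a, π h a * M.historyActionBackup b (VH n) h a)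
    (n : ℕ) (h : H) : VH n h = ∑ s, b h s * V n h s := by
  induction n generalizing h with
  | zero => exact h_zero h
  | succ n ih =>
    calc
      VH (n + 1) h = ∑ a, π h a * ∑ s, b h s * M.stateActionBackup (V n) h s a := by
        simp only [hVH, hb.historyActionBackup_eq_sum ih]
      _ = ∑ s, b h s * ∑ a, π h a * M.stateActionBackup (V n) h s a := by
        simp only [Finset.mul_sum, mul_left_comm (π h _)]
        exact Finset.sum_comm
      _ = ∑ s, b h s * V (n + 1) h s := by simp only [hV]

end WeightedPOMDP

theorem history_action_value_eq_belief_expectation_general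
    {K S A O H : Type*} [CommSemiring K] [Fintype S] [Fintype A] [Fintype O]
    (M : WeightedPOMDP K S A O H) (π : H → A → K) (b : H → S → K) (hb : M.IsBelief b)
    (V : ℕ → H → S → K) (VH : ℕ → H → K)
    (h_zero : ∀ h, VH 0 h = ∑ s, b h s * V 0 h s)
    (hV : ∀ n h s, V (n + 1) h s = ∑ a, π h a * M.stateActionBackup (V n) h s a)
    (hVH : ∀ n h, VH (n + 1) h = ∑ a, π h a * M.historyActionBackup b (VH n) h a)
    (n : ℕ) (h : H) (a : A) :
    M.historyActionBackup b (VH n) h a = ∑ s, b h s * M.stateActionBackup (V n) h s a :=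
  hb.historyActionBackup_eq_sum (hb.historyValue_eq_sum h_zero hV hVH n) h a

/-- The history action-value equals the belief-expectation of the
history-state action-value: Q^π(h,a) = E_{s∼b(h)}[Q^π(h,s,a)]. -/
theorem history_action_value_eq_belief_expectation
    {S A O : Type*} [Fintype S] [Fintype A] [Fintype O]
    [Nonempty S] [Nonempty A] [Nonempty O]
    (T : S → A → PMF S) (Z : S → PMF O) (R : S → A → ℝ)
    (γ : ℝ) (hγ0 : 0 ≤ γ) (hγ1 : γ < 1)
    (π : List (A × O) → PMF A)
    (b : List (A × O) → PMF S)
    (hb : ∀ (h : List (A × O)) (a : A) (o : O) (s' : S),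
      (b (h ++ [(a, o)]) s').toReal *
        (∑ s : S, ∑ t : S, (b h s).toReal * (T s a t).toReal * (Z t o).toReal)
      = ∑ s : S, (b h s).toReal * (T s a s').toReal * (Z s' o).toReal)
    (V : ℕ → List (A × O) → S → ℝ)
    (hV0 : ∀ h s, V 0 h s = 0)
    (hV : ∀ n h s, V (n + 1) h s =
      ∑ a : A, (π h a).toReal *
        (R s a + γ * ∑ s' : S, (T s a s').toReal *
          ∑ o : O, (Z s' o).toReal * V n (h ++ [(a, o)]) s'))
    (VH : ℕ → List (A × O) → ℝ)
    (hVH0 : ∀ h, VH 0 h = 0)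
    (hVH : ∀ n h, VH (n + 1) h =
      ∑ a : A, (π h a).toReal *
        ((∑ s : S, (b h s).toReal * R s a) +
          γ * ∑ o : O,
            (∑ s : S, ∑ s' : S,
              (b h s).toReal * (T s a s').toReal * (Z s' o).toReal) *
            VH n (h ++ [(a, o)])))
    (QHS : ℕ → List (A × O) → S → A → ℝ)
    (hQHS : ∀ n h s a, QHS n h s a =
      R s a + γ * ∑ s' : S, (T s a s').toReal *
        ∑ o : O, (Z s' o).toReal * V n (h ++ [(a, o)]) s')
    (QH : ℕ → List (A × O) → A → ℝ)
    (hQH : ∀ n h a, QH n h a =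
      (∑ s : S, (b h s).toReal * R s a) +
        γ * ∑ o : O,
          (∑ s : S, ∑ s' : S,
            (b h s).toReal * (T s a s').toReal * (Z s' o).toReal) *
          VH n (h ++ [(a, o)])) :
    ∀ (n : ℕ) (h : List (A × O)) (a : A),
      QH n h a = ∑ s : S, (b h s).toReal * QHS n h s a := by
  simp only [hQH, hQHS]
  exact history_action_value_eq_belief_expectation_general
    { trans s a s' := (T s a s').toReal, obs _ _ s' o := (Z s' o).toReal, reward := R,
      discount := γ, update h a o := h ++ [(a, o)] }
    (fun h a => (π h a).toReal) (fun h s => (b h s).toReal) hb V VH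
    (by simp [hV0, hVH0]) hV hVH
end

section
/- Belief correctness: for every n, the joint distribution of (history, current state) after n steps factorizes through the belief: jointPMF n = (histPMF n).bind (fun h => (b h).map (fun s => (h, s))), where histPMF n := (jointPMF n).map Prod.fst and b is any belief satisfying the Bayes recursion with b [] = μ. (The fact that the conditional distribution of the latent state given the observable history equals the belief-state b(h) = Pr(S | h), underlying the paper's asymmetric policy gradient theorem.) -/
/-!
By Bayes' rule, drawing a state and then its observation has the same joint law as drawing the
observation from its marginal and then the state from the posterior. So if the state is
distributed as `b h` given the history `h`, then after one more step it is distributed as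
`b (h ++ [(a, o)])` given `h ++ [(a, o)]`: the action depends on the history alone, and the belief
is the posterior of the predicted state. By induction every joint law is a mixture
`∑ h, ν h · (δ_h ⊗ b h)`, in which `ν` is necessarily the marginal law of the history.
-/

section JointLaw

variable {α β γ : Type*}

theorem pmf_map_apply_of_injective {f : α → β} (hf : Function.Injective f) (p : PMF α) (x : α) :
    p.map f (f x) = p x := by
  classical
  simp only [PMF.map_apply, hf.eq_iff, tsum_ite_eq']

theorem toReal_pmf_bind_apply [Fintype α] (p : PMF α) (f : α → PMF β) (y : β) :
    (p.bind f y).toReal = ∑ x, (p x).toReal * (f x y).toReal := by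
  rw [PMF.bind_apply, tsum_fintype, ENNReal.toReal_sum fun x _ =>
    ENNReal.mul_ne_top (p.apply_ne_top x) ((f x).apply_ne_top y)]
  simp only [ENNReal.toReal_mul]

/-- The joint law of `(x, y)` where `x` has law `p` and `y` has conditional law `κ x` given `x`:
the analogue for `PMF` of `MeasureTheory.Measure.compProd`. -/
noncomputable def pmfCompProd (p : PMF α) (κ : α → PMF β) : PMF (α × β) :=
  p.bind fun x => (κ x).map (Prod.mk x)

theorem pmfCompProd_apply (p : PMF α) (κ : α → PMF β) (x : α) (y : β) :
    pmfCompProd p κ (x, y) = p x * κ x y := by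
  classical
  have fiber_apply (x' : α) : (κ x').map (Prod.mk x') (x, y) = if x' = x then κ x y else 0 := by
    split_ifs with hx
    · rw [hx, pmf_map_apply_of_injective (Prod.mk_right_injective x)]
    · simp [PMF.map_apply, Ne.symm hx]
  simp only [pmfCompProd, PMF.bind_apply, fiber_apply, mul_ite, mul_zero, tsum_ite_eq]

theorem map_fst_pmfCompProd (p : PMF α) (κ : α → PMF β) :
    (pmfCompProd p κ).map Prod.fst = p := by
  have map_fst_fiber (x : α) : ((κ x).map (Prod.mk x)).map Prod.fst = PMF.pure x :=
    (PMF.map_comp _ _ _).trans (PMF.map_const _ _)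
  simp only [pmfCompProd, PMF.map_bind, map_fst_fiber, PMF.bind_pure]

theorem pmfCompProd_bind (p : PMF α) (f : α → PMF β) (κ : β → PMF γ) :
    pmfCompProd (p.bind f) κ = p.bind fun x => pmfCompProd (f x) κ :=
  PMF.bind_bind _ _ _

theorem bind_pmfCompProd {δ : Type*} (p : PMF α) (κ : α → PMF β) (f : α × β → PMF δ) :
    (pmfCompProd p κ).bind f = p.bind fun x => (κ x).bind fun y => f (x, y) := by
  simp only [pmfCompProd, PMF.bind_bind, PMF.bind_map, Function.comp_def]

end JointLaw

section Posterior

variable {S O : Type*} {ρ : PMF S} {Z : S → PMF O} {β : O → PMF S}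

/-- `β o` is a posterior of the prior `ρ` after observing `o` through the kernel `Z`. Bayes' rule is
stated without division, so `β o` is arbitrary when `o` has probability zero. -/
def IsPosterior (ρ : PMF S) (Z : S → PMF O) (β : O → PMF S) : Prop :=
  ∀ o s, β o s * ρ.bind Z o = ρ s * Z s o

theorem isPosterior_iff_toReal :
    IsPosterior ρ Z β ↔
      ∀ o s, (β o s).toReal * (ρ.bind Z o).toReal = (ρ s).toReal * (Z s o).toReal := by
  refine forall₂_congr fun o s => ?_
  rw [← ENNReal.toReal_mul, ← ENNReal.toReal_mul, ENNReal.toReal_eq_toReal_iff']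
  · exact ENNReal.mul_ne_top (PMF.apply_ne_top _ _) (PMF.apply_ne_top _ _)
  · exact ENNReal.mul_ne_top (PMF.apply_ne_top _ _) (PMF.apply_ne_top _ _)

theorem IsPosterior.pmfCompProd_eq_map_swap (hβ : IsPosterior ρ Z β) :
    pmfCompProd (ρ.bind Z) β = (pmfCompProd ρ Z).map Prod.swap := by
  ext ⟨o, s⟩
  calc pmfCompProd (ρ.bind Z) β (o, s) = ρ.bind Z o * β o s := pmfCompProd_apply _ _ _ _
    _ = ρ s * Z s o := by rw [mul_comm, hβ]
    _ = pmfCompProd ρ Z (s, o) := (pmfCompProd_apply _ _ _ _).symm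
    _ = (pmfCompProd ρ Z).map Prod.swap (o, s) :=
        (pmf_map_apply_of_injective Prod.swap_injective _ (s, o)).symm

end Posterior

section Belief

variable {S A O : Type*} {T : S → A → PMF S} {Z : S → PMF O} {b : List (A × O) → PMF S}

/-- The Bayes recursion of a POMDP: the belief after `h ++ [(a, o)]` is a posterior, given the
observation `o`, of the state predicted from the belief `b h` and the action `a`. -/
def IsBelief (T : S → A → PMF S) (Z : S → PMF O) (b : List (A × O) → PMF S) : Prop :=
  ∀ h a, IsPosterior ((b h).bind fun s => T s a) Z fun o => b (h ++ [(a, o)])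

theorem isBelief_iff_toReal [Fintype S] :
    IsBelief T Z b ↔ ∀ h a o s',
      (b (h ++ [(a, o)]) s').toReal *
        (∑ s, ∑ t, (b h s).toReal * (T s a t).toReal * (Z t o).toReal)
      = ∑ s, (b h s).toReal * (T s a s').toReal * (Z s' o).toReal := by
  simp only [IsBelief, isPosterior_iff_toReal, PMF.bind_bind, toReal_pmf_bind_apply, Finset.mul_sum,
    Finset.sum_mul, mul_assoc]

/-- One transition of the pair (history, state) under the policy `π`. -/
noncomputable def historyStateStep (T : S → A → PMF S) (Z : S → PMF O)
    (π : List (A × O) → PMF A) (hs : List (A × O) × S) : PMF (List (A × O) × S) :=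
  (π hs.1).bind fun a => (T hs.2 a).bind fun s' => (Z s').bind fun o =>
    PMF.pure (hs.1 ++ [(a, o)], s')

/-- One transition of the history alone under the policy `π`, the hidden state being drawn afresh
from the belief `b h`. -/
noncomputable def beliefStep (T : S → A → PMF S) (Z : S → PMF O) (π : List (A × O) → PMF A)
    (b : List (A × O) → PMF S) (h : List (A × O)) : PMF (List (A × O)) :=
  (π h).bind fun a => (((b h).bind fun s => T s a).bind Z).map fun o => h ++ [(a, o)]

theorem IsBelief.pmfCompProd_map_append (hb : IsBelief T Z b) (h : List (A × O)) (a : A) :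
    pmfCompProd ((((b h).bind fun s => T s a).bind Z).map fun o => h ++ [(a, o)]) b =
      (b h).bind fun s => (T s a).bind fun s' => (Z s').bind fun o =>
        PMF.pure (h ++ [(a, o)], s') := by
  have relabelled := congrArg (PMF.map fun os : O × S => (h ++ [(a, os.1)], os.2))
    (hb h a).pmfCompProd_eq_map_swap
  simpa only [pmfCompProd, ← PMF.bind_pure_comp, PMF.bind_bind, PMF.pure_bind, PMF.map_bind,
    Function.comp_def, Prod.swap_prod_mk] using relabelled

theorem IsBelief.bind_historyStateStep (hb : IsBelief T Z b)
    (π : List (A × O) → PMF A) (ν : PMF (List (A × O))) :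
    (pmfCompProd ν b).bind (historyStateStep T Z π) =
      pmfCompProd (ν.bind (beliefStep T Z π b)) b := by
  rw [bind_pmfCompProd, pmfCompProd_bind]
  congr 1 with h : 1
  calc (b h).bind (fun s => historyStateStep T Z π (h, s))
      = (π h).bind fun a => (b h).bind fun s => (T s a).bind fun s' => (Z s').bind fun o =>
          PMF.pure (h ++ [(a, o)], s') := by
        simp only [historyStateStep]
        exact PMF.bind_comm _ _ _
    _ = (π h).bind fun a =>
          pmfCompProd ((((b h).bind fun s => T s a).bind Z).map fun o => h ++ [(a, o)]) b := by
        simp only [hb.pmfCompProd_map_append]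
    _ = pmfCompProd (beliefStep T Z π b h) b := (pmfCompProd_bind _ _ _).symm

end Belief

theorem joint_factorizes_through_belief_general
    {S A O : Type*} {T : S → A → PMF S} {Z : S → PMF O} {π : List (A × O) → PMF A}
    {μ : PMF S} {b : List (A × O) → PMF S} (hb0 : b [] = μ) (hb : IsBelief T Z b)
    {jointPMF : ℕ → PMF (List (A × O) × S)}
    (hJ0 : jointPMF 0 = μ.map (Prod.mk []))
    (hJ : ∀ n, jointPMF (n + 1) = (jointPMF n).bind (historyStateStep T Z π)) (n : ℕ) :
    jointPMF n = pmfCompProd ((jointPMF n).map Prod.fst) b := by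
  have mixture : ∃ ν, jointPMF n = pmfCompProd ν b := by
    induction n with
    | zero => exact ⟨PMF.pure [], by rw [hJ0, pmfCompProd, PMF.pure_bind, hb0]⟩
    | succ n ih =>
      obtain ⟨ν, hν⟩ := ih
      exact ⟨ν.bind (beliefStep T Z π b), by rw [hJ, hν, hb.bind_historyStateStep]⟩
  obtain ⟨ν, hν⟩ := mixture
  rw [hν, map_fst_pmfCompProd]

/-- Belief correctness: the joint distribution of (history, current state)
factorizes through the belief, i.e. the conditional distribution of the
latent state given the observable history is the belief-state b(h). -/
theorem joint_factorizes_through_belief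
    {S A O : Type*} [Fintype S] [Fintype A] [Fintype O]
    [Nonempty S] [Nonempty A] [Nonempty O]
    (T : S → A → PMF S) (Z : S → PMF O) (R : S → A → ℝ)
    (γ : ℝ) (hγ0 : 0 ≤ γ) (hγ1 : γ < 1)
    (π : List (A × O) → PMF A)
    (μ : PMF S)
    (b : List (A × O) → PMF S)
    (hb0 : b ([] : List (A × O)) = μ)
    (hb : ∀ (h : List (A × O)) (a : A) (o : O) (s' : S),
      (b (h ++ [(a, o)]) s').toReal *
        (∑ s : S, ∑ t : S, (b h s).toReal * (T s a t).toReal * (Z t o).toReal)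
      = ∑ s : S, (b h s).toReal * (T s a s').toReal * (Z s' o).toReal)
    (jointPMF : ℕ → PMF (List (A × O) × S))
    (hJ0 : jointPMF 0 = μ.map (fun s => (([] : List (A × O)), s)))
    (hJ : ∀ n, jointPMF (n + 1) =
      (jointPMF n).bind fun hs =>
        (π hs.1).bind fun a =>
          (T hs.2 a).bind fun s' =>
            (Z s').bind fun o =>
              PMF.pure (hs.1 ++ [(a, o)], s')) :
    ∀ n : ℕ, jointPMF n =
      ((jointPMF n).map Prod.fst).bind
        (fun h => (b h).map (fun s => (h, s))) :=
  joint_factorizes_through_belief_general hb0 (isBelief_iff_toReal.2 hb) hJ0 hJ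
end

section
/- Unbiasedness of the asymmetric policy-gradient estimator at each time step: for any belief b satisfying the Bayes recursion with b [] = μ, any n, m : ℕ, and any function g : List (A × O) → A → ℝ, Σ_{(h,s)} jointPMF n (h,s) * Σ_a π h a * QHS m h s a * g h a = Σ_{(h,s)} jointPMF n (h,s) * Σ_a π h a * QH m h a * g h a. (Finite-horizon core of the paper's Theorem 5, the Asymmetric Policy Gradient theorem: replacing Q^π(h_t,a_t) by Q^π(h_t,s_t,a_t) in the policy gradient expectation leaves it unchanged; taking g = ∇_θ log π recovers the theorem.) -/
/-!
The belief `b h` is the conditional law of the hidden state given the history `h`, whichever policy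
generates the data: the joint law of `(h, s)` is obtained by drawing the history from its marginal
and then the state from `b h`. For a fixed history, averaging the state-based action-value over
`b h` yields the history-based one, because Bayes' rule makes belief averaging commute with the
one-step lookahead, and any weight depending only on the history and the action factors out of
that average.
-/

section PMF

variable {α β δ : Type*}

theorem pmf_bind_map_apply_of_injective2 {f : α → β → δ} (hf : Function.Injective2 f)
    (p : PMF α) (q : α → PMF β) (a : α) (b : β) :
    (p.bind fun a => (q a).map (f a)) (f a b) = p a * q a b := by
  classical
  rw [PMF.bind_apply, tsum_eq_single a fun a' ha => by simp [PMF.map_apply, hf.eq_iff, ha.symm],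
    PMF.map_apply, tsum_eq_single b fun b' hb => by simp [hf.eq_iff, hb.symm], if_pos rfl]

theorem pmf_bind_map_prodMk_apply (p : PMF α) (q : α → PMF β) (a : α) (b : β) :
    (p.bind fun a => (q a).map (Prod.mk a)) (a, b) = p a * q a b :=
  pmf_bind_map_apply_of_injective2 (fun _ _ _ _ => Prod.mk.inj) p q a b

theorem pmf_toReal_bind_apply [Fintype α] (p : PMF α) (q : α → PMF β) (b : β) :
    (p.bind q b).toReal = ∑ a, (p a).toReal * (q a b).toReal := by
  rw [PMF.bind_apply, tsum_fintype, ENNReal.toReal_sum fun a _ =>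
    ENNReal.mul_ne_top (p.apply_ne_top a) ((q a).apply_ne_top b)]
  simp only [ENNReal.toReal_mul]

theorem pmf_ext_toReal {p q : PMF α} (h : ∀ a, (p a).toReal = (q a).toReal) : p = q :=
  PMF.ext fun a => (ENNReal.toReal_eq_toReal_iff' (p.apply_ne_top a) (q.apply_ne_top a)).1 (h a)

theorem pmf_sum_toReal [Fintype α] (p : PMF α) : ∑ a, (p a).toReal = 1 := by
  rw [← ENNReal.toReal_sum fun a _ => p.apply_ne_top a, ← tsum_fintype (L := .unconditional α),
    p.tsum_coe, ENNReal.toReal_one]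

theorem pmf_tsum_bind_map_prodMk_mul [Fintype β] {p : PMF α} (hp : p.support.Finite)
    (q : α → PMF β) (f : α × β → ℝ) :
    ∑' x, ((p.bind fun a => (q a).map (Prod.mk a)) x).toReal * f x =
      ∑' a, (p a).toReal * ∑ b, (q a b).toReal * f (a, b) := by
  have hsummable : Summable fun x : α × β => (p x.1 * q x.1 x.2).toReal * f x := by
    refine summable_of_hasFiniteSupport ((hp.prod Set.finite_univ).subset fun x hx => ?_)
    exact ⟨fun hpx => hx (by simp [hpx]), Set.mem_univ _⟩
  calc
    _ = ∑' x : α × β, (p x.1 * q x.1 x.2).toReal * f x :=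
      tsum_congr fun x => by rw [← pmf_bind_map_prodMk_apply]
    _ = _ := by
      rw [hsummable.tsum_prod]
      simp only [tsum_fintype, ENNReal.toReal_mul, mul_assoc, Finset.mul_sum]

end PMF

/-- A POMDP whose observations depend only on the successor state. The discount is an arbitrary
real number: only finite-horizon values are considered. -/
structure POMDP (S A O : Type*) where
  transition : S → A → PMF S
  observation : S → PMF O
  reward : S → A → ℝ
  discount : ℝ

namespace POMDP

variable {S A O : Type*}

section Dynamics

/-- The joint law of the history and the state after `n` steps, for data generated by the policy
`π` from the initial state distribution `μ`. -/
noncomputable def jointDist (M : POMDP S A O) (π : List (A × O) → PMF A) (μ : PMF S) :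
    ℕ → PMF (List (A × O) × S)
  | 0 => μ.map fun s => ([], s)
  | n + 1 => (M.jointDist π μ n).bind fun hs => (π hs.1).bind fun a =>
      (M.transition hs.2 a).bind fun s' => (M.observation s').bind fun o =>
        PMF.pure (hs.1 ++ [(a, o)], s')

/-- The joint law of the next observation and the successor state when action `a` is taken in a
state drawn from `p`. -/
noncomputable def outcomeDist (M : POMDP S A O) (p : PMF S) (a : A) : PMF (O × S) :=
  (p.bind fun s => M.transition s a).bind fun s' => (M.observation s').map fun o => (o, s')

/-- The law of the next observation when action `a` is taken in a state drawn from `p`. -/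
noncomputable def obsDist (M : POMDP S A O) (p : PMF S) (a : A) : PMF O :=
  p.bind fun s => (M.transition s a).bind M.observation

/-- The law of the history after `n` steps under the policy `π`, each observation being predicted
from the belief at the preceding history. -/
noncomputable def historyDist (M : POMDP S A O) (π : List (A × O) → PMF A)
    (b : List (A × O) → PMF S) : ℕ → PMF (List (A × O))
  | 0 => PMF.pure []
  | n + 1 => (M.historyDist π b n).bind fun h => (π h).bind fun a =>
      (M.obsDist (b h) a).map fun o => h ++ [(a, o)]

theorem eq_jointDist {M : POMDP S A O} {π : List (A × O) → PMF A} {μ : PMF S}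
    {J : ℕ → PMF (List (A × O) × S)} (h_zero : J 0 = μ.map fun s => ([], s))
    (h_succ : ∀ n, J (n + 1) = (J n).bind fun hs => (π hs.1).bind fun a =>
      (M.transition hs.2 a).bind fun s' => (M.observation s').bind fun o =>
        PMF.pure (hs.1 ++ [(a, o)], s')) :
    J = M.jointDist π μ := by
  funext n
  induction n with
  | zero => exact h_zero
  | succ n ih => rw [h_succ, ih, jointDist]

theorem finite_support_historyDist [Finite A] [Finite O] (M : POMDP S A O)
    (π : List (A × O) → PMF A) (b : List (A × O) → PMF S) (n : ℕ) :
    (M.historyDist π b n).support.Finite := by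
  induction n with
  | zero => simp [historyDist]
  | succ n ih =>
    simp only [historyDist, PMF.support_bind, PMF.support_map]
    exact ih.biUnion fun h _ => (Set.toFinite _).biUnion fun a _ => Set.toFinite _

theorem toReal_outcomeDist_apply [Fintype S] (M : POMDP S A O) (p : PMF S) (a : A) (o : O)
    (s' : S) : (M.outcomeDist p a (o, s')).toReal =
      ∑ s, (p s).toReal * (M.transition s a s').toReal * (M.observation s' o).toReal := by
  have hinj : Function.Injective2 fun (s' : S) (o : O) => (o, s') :=
    fun _ _ _ _ h => (Prod.mk.inj h).symm
  rw [outcomeDist, pmf_bind_map_apply_of_injective2 hinj, ENNReal.toReal_mul,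
    pmf_toReal_bind_apply, Finset.sum_mul]

theorem jointDist_succ_eq_bind_outcomeDist {M : POMDP S A O} {π : List (A × O) → PMF A}
    {μ : PMF S} {n : ℕ} {p : PMF (List (A × O))} {q : List (A × O) → PMF S}
    (h_joint : M.jointDist π μ n = p.bind fun h => (q h).map (Prod.mk h)) :
    M.jointDist π μ (n + 1) = p.bind fun h => (π h).bind fun a =>
      (M.outcomeDist (q h) a).map fun os => (h ++ [(a, os.1)], os.2) := by
  simp only [jointDist, h_joint, outcomeDist, PMF.bind_bind, PMF.bind_map, PMF.map_bind,
    PMF.map_comp, Function.comp_def]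
  congr! 2 with h
  exact PMF.bind_comm _ _ _

end Dynamics

section Belief

variable [Fintype S]

/-- The probability of observing `o` after taking action `a` in a state drawn from `p`; this is
`P(o | h, a)` when `p` is the belief at `h`. -/
noncomputable def obsProb (M : POMDP S A O) (p : PMF S) (a : A) (o : O) : ℝ :=
  ∑ s, ∑ s', (p s).toReal * (M.transition s a s').toReal * (M.observation s' o).toReal

/-- The Bayes recursion. It is stated without division, so it leaves the belief unconstrained
after observations of probability zero. -/
def IsBelief (M : POMDP S A O) (b : List (A × O) → PMF S) : Prop :=
  ∀ h a o s', (b (h ++ [(a, o)]) s').toReal * M.obsProb (b h) a o =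
    ∑ s, (b h s).toReal * (M.transition s a s').toReal * (M.observation s' o).toReal

variable {M : POMDP S A O} {b : List (A × O) → PMF S}

theorem toReal_obsDist_apply (M : POMDP S A O) (p : PMF S) (a : A) (o : O) :
    (M.obsDist p a o).toReal = M.obsProb p a o := by
  simp only [obsDist, obsProb, pmf_toReal_bind_apply, Finset.mul_sum, mul_assoc]

theorem IsBelief.toReal_outcomeDist_apply (hb : M.IsBelief b) (h : List (A × O)) (a : A) (o : O)
    (s' : S) : (M.outcomeDist (b h) a (o, s')).toReal =
      M.obsProb (b h) a o * (b (h ++ [(a, o)]) s').toReal := by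
  rw [M.toReal_outcomeDist_apply, ← hb, mul_comm]

theorem IsBelief.outcomeDist_eq (hb : M.IsBelief b) (h : List (A × O)) (a : A) :
    M.outcomeDist (b h) a =
      (M.obsDist (b h) a).bind fun o => (b (h ++ [(a, o)])).map (Prod.mk o) := by
  refine pmf_ext_toReal fun ⟨o, s'⟩ => ?_
  rw [hb.toReal_outcomeDist_apply, pmf_bind_map_prodMk_apply,
    ENNReal.toReal_mul, toReal_obsDist_apply]

theorem IsBelief.jointDist_eq (hb : M.IsBelief b) (π : List (A × O) → PMF A) (n : ℕ) :
    M.jointDist π (b []) n = (M.historyDist π b n).bind fun h => (b h).map (Prod.mk h) := by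
  induction n with
  | zero => simp only [jointDist, historyDist, PMF.pure_bind]
  | succ n ih =>
    simp only [jointDist_succ_eq_bind_outcomeDist ih, hb.outcomeDist_eq, historyDist,
      PMF.bind_bind, PMF.bind_map, PMF.map_bind, PMF.map_comp, Function.comp_def]

theorem IsBelief.tsum_jointDist_mul [Finite A] [Finite O] (hb : M.IsBelief b)
    (π : List (A × O) → PMF A) (n : ℕ) (f : List (A × O) × S → ℝ) :
    ∑' hs, (M.jointDist π (b []) n hs).toReal * f hs =
      ∑' h, (M.historyDist π b n h).toReal * ∑ s, (b h s).toReal * f (h, s) := by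
  rw [hb.jointDist_eq, pmf_tsum_bind_map_prodMk_mul (M.finite_support_historyDist π b n)]

end Belief

section Value

variable [Fintype S] [Fintype O]

/-- The one-step lookahead of a value function `v` of histories and states. -/
noncomputable def stateBackup (M : POMDP S A O) (v : List (A × O) → S → ℝ) (h : List (A × O))
    (s : S) (a : A) : ℝ :=
  M.reward s a + M.discount * ∑ s', (M.transition s a s').toReal *
    ∑ o, (M.observation s' o).toReal * v (h ++ [(a, o)]) s'

/-- The one-step lookahead, under the belief `b`, of a value function `v` of histories. -/
noncomputable def historyBackup (M : POMDP S A O) (b : List (A × O) → PMF S)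
    (v : List (A × O) → ℝ) (h : List (A × O)) (a : A) : ℝ :=
  ∑ s, (b h s).toReal * M.reward s a +
    M.discount * ∑ o, M.obsProb (b h) a o * v (h ++ [(a, o)])

/-- The average of a function of histories and states over the belief `b`. -/
noncomputable def beliefAverage (b : List (A × O) → PMF S) (v : List (A × O) → S → ℝ)
    (h : List (A × O)) : ℝ :=
  ∑ s, (b h s).toReal * v h s

theorem sum_lookahead_eq_sum_outcomeDist (M : POMDP S A O) (p : PMF S) (a : A) (f : O → S → ℝ) :
    ∑ s, (p s).toReal * ∑ s', (M.transition s a s').toReal *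
        ∑ o, (M.observation s' o).toReal * f o s' =
      ∑ o, ∑ s', (M.outcomeDist p a (o, s')).toReal * f o s' := by
  simp only [toReal_outcomeDist_apply, Finset.mul_sum, Finset.sum_mul, mul_assoc]
  rw [Finset.sum_comm, Finset.sum_comm (s := (Finset.univ : Finset O))]
  exact Finset.sum_congr rfl fun s' _ => Finset.sum_comm

theorem IsBelief.historyBackup_beliefAverage {M : POMDP S A O} {b : List (A × O) → PMF S}
    (hb : M.IsBelief b) (v : List (A × O) → S → ℝ) (h : List (A × O)) (a : A) :
    M.historyBackup b (beliefAverage b v) h a =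
      ∑ s, (b h s).toReal * M.stateBackup v h s a := by
  simp only [historyBackup, stateBackup, mul_add, Finset.sum_add_distrib,
    mul_left_comm _ M.discount, ← Finset.mul_sum]
  rw [M.sum_lookahead_eq_sum_outcomeDist (b h) a fun o s' => v (h ++ [(a, o)]) s']
  simp only [hb.toReal_outcomeDist_apply, beliefAverage, Finset.mul_sum, mul_assoc]

variable [Fintype A]

/-- The `n`-step history-state value `V n h s` of the policy `π`. -/
noncomputable def stateValue (M : POMDP S A O) (π : List (A × O) → PMF A) :
    ℕ → List (A × O) → S → ℝ
  | 0, _, _ => 0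
  | n + 1, h, s => ∑ a, (π h a).toReal * M.stateBackup (M.stateValue π n) h s a

/-- The `n`-step history value `VH n h` of the policy `π` under the belief `b`. -/
noncomputable def historyValue (M : POMDP S A O) (b : List (A × O) → PMF S)
    (π : List (A × O) → PMF A) : ℕ → List (A × O) → ℝ
  | 0, _ => 0
  | n + 1, h => ∑ a, (π h a).toReal * M.historyBackup b (M.historyValue b π n) h a

theorem eq_stateValue {M : POMDP S A O} {π : List (A × O) → PMF A}
    {V : ℕ → List (A × O) → S → ℝ} (h_zero : ∀ h s, V 0 h s = 0)
    (h_succ : ∀ n h s, V (n + 1) h s = ∑ a, (π h a).toReal * M.stateBackup (V n) h s a) :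
    V = M.stateValue π := by
  funext n
  induction n with
  | zero => funext h s; exact h_zero h s
  | succ n ih => funext h s; rw [h_succ, ih, stateValue]

theorem eq_historyValue {M : POMDP S A O} {b : List (A × O) → PMF S} {π : List (A × O) → PMF A}
    {V : ℕ → List (A × O) → ℝ} (h_zero : ∀ h, V 0 h = 0)
    (h_succ : ∀ n h, V (n + 1) h = ∑ a, (π h a).toReal * M.historyBackup b (V n) h a) :
    V = M.historyValue b π := by
  funext n
  induction n with
  | zero => funext h; exact h_zero h
  | succ n ih => funext h; rw [h_succ, ih, historyValue]

theorem IsBelief.historyValue_eq_beliefAverage {M : POMDP S A O} {b : List (A × O) → PMF S}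
    (hb : M.IsBelief b) (π : List (A × O) → PMF A) (n : ℕ) :
    M.historyValue b π n = beliefAverage b (M.stateValue π n) := by
  funext h
  induction n generalizing h with
  | zero => simp [historyValue, stateValue, beliefAverage]
  | succ n ih =>
    simp only [historyValue, funext ih, hb.historyBackup_beliefAverage, beliefAverage, stateValue,
      Finset.mul_sum]
    rw [Finset.sum_comm]
    simp only [mul_left_comm]

/-- The `n`-step history-state action-value `QHS n h s a` of the policy `π`. -/
noncomputable def stateActionValue (M : POMDP S A O) (π : List (A × O) → PMF A) (n : ℕ) :
    List (A × O) → S → A → ℝ :=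
  M.stateBackup (M.stateValue π n)

/-- The `n`-step history action-value `QH n h a` of the policy `π` under the belief `b`. -/
noncomputable def historyActionValue (M : POMDP S A O) (b : List (A × O) → PMF S)
    (π : List (A × O) → PMF A) (n : ℕ) : List (A × O) → A → ℝ :=
  M.historyBackup b (M.historyValue b π n)

theorem IsBelief.sum_mul_stateActionValue {M : POMDP S A O} {b : List (A × O) → PMF S}
    (hb : M.IsBelief b) (π : List (A × O) → PMF A) (n : ℕ) (h : List (A × O)) (a : A) :
    ∑ s, (b h s).toReal * M.stateActionValue π n h s a = M.historyActionValue b π n h a := by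
  rw [historyActionValue, hb.historyValue_eq_beliefAverage, hb.historyBackup_beliefAverage,
    stateActionValue]

end Value

end POMDP

/-- The data may be generated by a behaviour policy `β` other than the evaluated policy `π`; the
weight `w` absorbs the action probabilities, importance ratios and score function. -/
theorem asymmetric_policy_gradient_unbiased_general {S A O : Type*} [Fintype S] [Fintype A]
    [Fintype O] {M : POMDP S A O} {b : List (A × O) → PMF S} (hb : M.IsBelief b)
    (β π : List (A × O) → PMF A) (n m : ℕ) (w : List (A × O) → A → ℝ) :
    ∑' hs, (M.jointDist β (b []) n hs).toReal *
        ∑ a, w hs.1 a * M.stateActionValue π m hs.1 hs.2 a =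
      ∑' hs, (M.jointDist β (b []) n hs).toReal *
        ∑ a, w hs.1 a * M.historyActionValue b π m hs.1 a := by
  rw [hb.tsum_jointDist_mul, hb.tsum_jointDist_mul]
  refine tsum_congr fun h => congrArg _ ?_
  calc
    ∑ s, (b h s).toReal * ∑ a, w h a * M.stateActionValue π m h s a =
        ∑ a, w h a * ∑ s, (b h s).toReal * M.stateActionValue π m h s a := by
      simp only [Finset.mul_sum, mul_left_comm]
      exact Finset.sum_comm
    _ = ∑ a, w h a * M.historyActionValue b π m h a := by
      simp only [hb.sum_mul_stateActionValue]
    _ = ∑ s, (b h s).toReal * ∑ a, w h a * M.historyActionValue b π m h a := by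
      rw [← Finset.sum_mul, pmf_sum_toReal, one_mul]

/-- Finite-horizon core of the Asymmetric Policy Gradient theorem:
replacing Q^π(h,a) by Q^π(h,s,a) in the policy-gradient expectation
leaves it unchanged. -/
theorem asymmetric_policy_gradient_unbiased
    {S A O : Type*} [Fintype S] [Fintype A] [Fintype O]
    [Nonempty S] [Nonempty A] [Nonempty O]
    (T : S → A → PMF S) (Z : S → PMF O) (R : S → A → ℝ)
    (γ : ℝ) (hγ0 : 0 ≤ γ) (hγ1 : γ < 1)
    (π : List (A × O) → PMF A)
    (μ : PMF S)
    (b : List (A × O) → PMF S)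
    (hb0 : b ([] : List (A × O)) = μ)
    (hb : ∀ (h : List (A × O)) (a : A) (o : O) (s' : S),
      (b (h ++ [(a, o)]) s').toReal *
        (∑ s : S, ∑ t : S, (b h s).toReal * (T s a t).toReal * (Z t o).toReal)
      = ∑ s : S, (b h s).toReal * (T s a s').toReal * (Z s' o).toReal)
    (V : ℕ → List (A × O) → S → ℝ)
    (hV0 : ∀ h s, V 0 h s = 0)
    (hV : ∀ n h s, V (n + 1) h s =
      ∑ a : A, (π h a).toReal *
        (R s a + γ * ∑ s' : S, (T s a s').toReal *
          ∑ o : O, (Z s' o).toReal * V n (h ++ [(a, o)]) s'))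
    (VH : ℕ → List (A × O) → ℝ)
    (hVH0 : ∀ h, VH 0 h = 0)
    (hVH : ∀ n h, VH (n + 1) h =
      ∑ a : A, (π h a).toReal *
        ((∑ s : S, (b h s).toReal * R s a) +
          γ * ∑ o : O,
            (∑ s : S, ∑ s' : S,
              (b h s).toReal * (T s a s').toReal * (Z s' o).toReal) *
            VH n (h ++ [(a, o)])))
    (QHS : ℕ → List (A × O) → S → A → ℝ)
    (hQHS : ∀ n h s a, QHS n h s a =
      R s a + γ * ∑ s' : S, (T s a s').toReal *
        ∑ o : O, (Z s' o).toReal * V n (h ++ [(a, o)]) s')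
    (QH : ℕ → List (A × O) → A → ℝ)
    (hQH : ∀ n h a, QH n h a =
      (∑ s : S, (b h s).toReal * R s a) +
        γ * ∑ o : O,
          (∑ s : S, ∑ s' : S,
            (b h s).toReal * (T s a s').toReal * (Z s' o).toReal) *
          VH n (h ++ [(a, o)]))
    (jointPMF : ℕ → PMF (List (A × O) × S))
    (hJ0 : jointPMF 0 = μ.map (fun s => (([] : List (A × O)), s)))
    (hJ : ∀ n, jointPMF (n + 1) =
      (jointPMF n).bind fun hs =>
        (π hs.1).bind fun a =>
          (T hs.2 a).bind fun s' =>
            (Z s').bind fun o =>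
              PMF.pure (hs.1 ++ [(a, o)], s')) :
    ∀ (n m : ℕ) (g : List (A × O) → A → ℝ),
      (∑' hs : List (A × O) × S,
        (jointPMF n hs).toReal *
          ∑ a : A, (π hs.1 a).toReal * QHS m hs.1 hs.2 a * g hs.1 a)
      = ∑' hs : List (A × O) × S,
          (jointPMF n hs).toReal *
            ∑ a : A, (π hs.1 a).toReal * QH m hs.1 a * g hs.1 a := by
  intro n m g
  let M : POMDP S A O := ⟨T, Z, R, γ⟩
  subst hb0
  obtain rfl : V = M.stateValue π := POMDP.eq_stateValue hV0 hV
  obtain rfl : VH = M.historyValue b π := POMDP.eq_historyValue hVH0 hVH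
  obtain rfl : QHS = M.stateActionValue π := by funext k h s a; exact hQHS k h s a
  obtain rfl : QH = M.historyActionValue b π := by funext k h a; exact hQH k h a
  obtain rfl : jointPMF = M.jointDist π (b []) := POMDP.eq_jointDist hJ0 hJ
  have hb' : M.IsBelief b := hb
  simpa only [mul_right_comm] using
    asymmetric_policy_gradient_unbiased_general hb' π π n m fun h a => (π h a).toReal * g h a
end

section
/- For a reactive policy, the history-state value depends on the history only through its last observation: if π h = ρ (lastObs h) for all nonempty histories h (for some ρ : O → PMF A), then for all n, all nonempty histories h' and h'' with lastObs h' = lastObs h'', and all states s, V n h' s = V n h'' s. (The invariance underlying the paper's analysis of reactive policies in Sections 4.2 and 4.3.) -/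
/-!
The last observation of an extended history `h ++ [(a, o)]` is `o`, whatever `h` is. So a one-step
backup sees `h` only through the action distribution `π h` and the values of the extensions of `h`;
if these agree for two histories with the same last observation, then so do the backed-up values.
The same induction on the horizon applies to every statistic of the history that determines the
policy and whose value after an extension is determined by its value before.
-/

open Function

section Statistic

variable {H X M : Type*}

/-- A statistic `m` of histories is updatable along `extend` if `m (extend h x)` depends on `h` only
through `m h`, as for the memory of a finite-state controller. No update map `M → X → M` is
required as data, since only the values of `m` on actual histories matter. -/
def IsUpdatable (extend : H → X → H) (m : H → M) : Prop :=
  ∀ x, (fun h => m (extend h x)).FactorsThrough m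

theorem IsUpdatable.factorsThrough_of_recursion {P E : Type*} {extend : H → X → H} {m : H → M}
    (hm : IsUpdatable extend m) {π : H → P} (hπ : π.FactorsThrough m)
    {B : P → (X → E) → E} {V : ℕ → H → E} (hV0 : (V 0).FactorsThrough m)
    (hV : ∀ n h, V (n + 1) h = B (π h) fun x => V n (extend h x)) (n : ℕ) :
    (V n).FactorsThrough m := by
  induction n with
  | zero => exact hV0
  | succ n ih =>
    intro h' h'' heq
    have hext : (fun x => V n (extend h' x)) = fun x => V n (extend h'' x) :=
      funext fun x => ih (hm x heq)
    rw [hV, hV, hπ heq, hext]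

end Statistic

section LastObs

variable {A O : Type*}

/-- The last observation of a history. It is `none` for the empty history, so that it is a statistic
defined on all histories. -/
def lastObs (h : List (A × O)) : Option O :=
  h.getLast?.map Prod.snd

theorem lastObs_append_singleton (h : List (A × O)) (x : A × O) :
    lastObs (h ++ [x]) = some x.2 := by
  simp [lastObs]

theorem lastObs_of_ne_nil {h : List (A × O)} (hne : h ≠ []) :
    lastObs h = some (h.getLast hne).2 := by
  simp [lastObs, List.getLast?_eq_some_getLast hne]

theorem isUpdatable_lastObs :
    IsUpdatable (fun (h : List (A × O)) x => h ++ [x]) lastObs := by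
  intro x h' h'' _
  simp only [lastObs_append_singleton]

theorem factorsThrough_lastObs_of_reactive {P : Type*} {π : List (A × O) → P} {ρ : O → P}
    (hreactive : ∀ (h : List (A × O)) (hne : h ≠ []), π h = ρ (h.getLast hne).2) :
    π.FactorsThrough lastObs := by
  have hπ : π = (fun o? => o?.elim (π []) ρ) ∘ lastObs := by
    funext h
    by_cases hne : h = []
    · subst hne
      rfl
    · simp only [comp_apply, lastObs_of_ne_nil hne, Option.elim_some, hreactive h hne]
  rw [hπ]
  exact FactorsThrough.rfl.comp_left _

end LastObs

section Value

variable {S A O : Type*} [Fintype S] [Fintype A] [Fintype O]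

/-- The policy evaluation backup of a finite POMDP: the value, as a function of the state, of
drawing an action from `p` when the continuation after action `a` and observation `o` is worth
`W (a, o) s'` in the successor state `s'`. -/
noncomputable def policyBackup (T : S → A → PMF S) (Z : S → PMF O) (R : S → A → ℝ) (γ : ℝ)
    (p : PMF A) (W : A × O → S → ℝ) (s : S) : ℝ :=
  ∑ a, (p a).toReal *
    (R s a + γ * ∑ s', (T s a s').toReal * ∑ o, (Z s' o).toReal * W (a, o) s')

theorem reactive_value_depends_only_on_last_observation_general {M : Type*}
    (T : S → A → PMF S) (Z : S → PMF O) (R : S → A → ℝ) (γ : ℝ)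
    {m : List (A × O) → M} (hm : IsUpdatable (fun h x => h ++ [x]) m)
    {π : List (A × O) → PMF A} (hπ : π.FactorsThrough m)
    {V : ℕ → List (A × O) → S → ℝ} (hV0 : (V 0).FactorsThrough m)
    (hV : ∀ n h, V (n + 1) h = policyBackup T Z R γ (π h) fun x => V n (h ++ [x])) (n : ℕ) :
    (V n).FactorsThrough m :=
  hm.factorsThrough_of_recursion hπ hV0 hV n

end Value

/-- For a reactive policy, the history-state value depends on the history
only through its last observation. -/
theorem reactive_value_depends_only_on_last_observation
    {S A O : Type*} [Fintype S] [Fintype A] [Fintype O]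
    [Nonempty S] [Nonempty A] [Nonempty O]
    (T : S → A → PMF S) (Z : S → PMF O) (R : S → A → ℝ)
    (γ : ℝ) (hγ0 : 0 ≤ γ) (hγ1 : γ < 1)
    (π : List (A × O) → PMF A)
    (ρ : O → PMF A)
    (hreactive : ∀ (h : List (A × O)) (hne : h ≠ []),
      π h = ρ (h.getLast hne).2)
    (V : ℕ → List (A × O) → S → ℝ)
    (hV0 : ∀ h s, V 0 h s = 0)
    (hV : ∀ n h s, V (n + 1) h s =
      ∑ a : A, (π h a).toReal *
        (R s a + γ * ∑ s' : S, (T s a s').toReal *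
          ∑ o : O, (Z s' o).toReal * V n (h ++ [(a, o)]) s')) :
    ∀ (n : ℕ) (h' h'' : List (A × O)) (hne' : h' ≠ []) (hne'' : h'' ≠ []),
      (h'.getLast hne').2 = (h''.getLast hne'').2 →
        ∀ s : S, V n h' s = V n h'' s := by
  intro n h' h'' hne' hne'' hlast s
  have hobs : lastObs h' = lastObs h'' := by
    rw [lastObs_of_ne_nil hne', lastObs_of_ne_nil hne'', hlast]
  have hzero : (V 0).FactorsThrough lastObs := fun g g' _ =>
    funext fun t => (hV0 g t).trans (hV0 g' t).symm
  exact congrFun (reactive_value_depends_only_on_last_observation_general T Z R γ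
    isUpdatable_lastObs (factorsThrough_lastObs_of_reactive hreactive) hzero
    (fun k h => funext (hV k h)) n hobs) s
end

section
/- Under a deterministic observation function and a reactive policy, the history-state value reduces to the Markov state value: if Z s = PMF.pure (ζ s) for a function ζ : S → O, and π h = ρ (lastObs h) for all nonempty h, then for all n, all nonempty histories h, and all states s with lastObs h = ζ s, V n h s = W n s, where W is the n-step state value of the induced reactive Markov policy. (The key reduction in the paper's Theorem 3 for reactive policies under full observability.) -/
/-! Call a nonempty history `h` compatible with a state `s` when its last observation is `ζ s`.
Since `Z s'` is the point mass at `ζ s'`, almost surely the extended history `h ++ [(a, o)]` is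
compatible with the successor state `s'`. On compatible pairs a reactive policy acts as the Markov
policy `ρ ∘ ζ`, so agreement on compatible pairs is preserved by each Bellman backup. -/

section

variable {S A O M : Type*} [Fintype S] [Fintype A] [Fintype O] [AddCommMonoid M] [Module ℝ M]

theorem sum_toReal_pure_smul (o : O) (f : O → M) :
    ∑ o' : O, (PMF.pure o o').toReal • f o' = f o := by
  classical
  simp [PMF.pure_apply, apply_ite ENNReal.toReal, ite_smul]

/-- The Bellman evaluation operator of the policy `π` on history-state values, for rewards in a real
module. -/
noncomputable def historyBackup (T : S → A → PMF S) (Z : S → PMF O) (R : S → A → M) (γ : ℝ)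
    (π : List (A × O) → PMF A) (V : List (A × O) → S → M) (h : List (A × O)) (s : S) : M :=
  ∑ a : A, (π h a).toReal • (R s a + γ • ∑ s' : S, (T s a s').toReal •
    ∑ o : O, (Z s' o).toReal • V (h ++ [(a, o)]) s')

/-- The Bellman evaluation operator of the Markov policy `σ` on state values, for rewards in a real
module. -/
noncomputable def stateBackup (T : S → A → PMF S) (R : S → A → M) (γ : ℝ) (σ : S → PMF A)
    (W : S → M) (s : S) : M :=
  ∑ a : A, (σ s a).toReal • (R s a + γ • ∑ s' : S, (T s a s').toReal • W s')

variable (T : S → A → PMF S) {Z : S → PMF O} (R : S → A → M) (γ : ℝ) {π : List (A × O) → PMF A}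
  {ζ : S → O}

theorem historyBackup_eq_stateBackup (hdet : ∀ s, Z s = PMF.pure (ζ s)) {σ : S → PMF A}
    {V : List (A × O) → S → M} {W : S → M} {h : List (A × O)} {s : S} (hπ : π h = σ s)
    (hVW : ∀ a s', V (h ++ [(a, ζ s')]) s' = W s') :
    historyBackup T Z R γ π V h s = stateBackup T R γ σ W s := by
  simp only [historyBackup, stateBackup, hdet, sum_toReal_pure_smul, hπ, hVW]

theorem reactive_fully_observable_value_reduction_general
    (hdet : ∀ s, Z s = PMF.pure (ζ s)) {ρ : O → PMF A}
    (hreactive : ∀ (h : List (A × O)) (hne : h ≠ []), π h = ρ (h.getLast hne).2)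
    {V : ℕ → List (A × O) → S → M} (hV : ∀ n, V (n + 1) = historyBackup T Z R γ π (V n))
    {W : ℕ → S → M} (hW : ∀ n, W (n + 1) = stateBackup T R γ (ρ ∘ ζ) (W n))
    (hVW : ∀ (h : List (A × O)) (hne : h ≠ []) (s : S),
      (h.getLast hne).2 = ζ s → V 0 h s = W 0 s)
    (n : ℕ) (h : List (A × O)) (hne : h ≠ []) (s : S) (hs : (h.getLast hne).2 = ζ s) :
    V n h s = W n s := by
  induction n generalizing h s with
  | zero => exact hVW h hne s hs
  | succ n ih =>
    have policy_eq : π h = (ρ ∘ ζ) s := by rw [hreactive h hne, hs, Function.comp_apply]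
    have value_eq (a : A) (s' : S) : V n (h ++ [(a, ζ s')]) s' = W n s' :=
      ih _ (by simp) s' (by simp)
    rw [hV, hW, historyBackup_eq_stateBackup T R γ hdet policy_eq value_eq]

end

/-- Under a deterministic observation function and a reactive policy, the
history-state value reduces to the Markov state value of the induced
reactive Markov policy. -/
theorem reactive_fully_observable_value_reduction
    {S A O : Type*} [Fintype S] [Fintype A] [Fintype O]
    [Nonempty S] [Nonempty A] [Nonempty O]
    (T : S → A → PMF S) (Z : S → PMF O) (R : S → A → ℝ)
    (γ : ℝ) (hγ0 : 0 ≤ γ) (hγ1 : γ < 1)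
    (π : List (A × O) → PMF A)
    (ζ : S → O)
    (hdet : ∀ s : S, Z s = PMF.pure (ζ s))
    (ρ : O → PMF A)
    (hreactive : ∀ (h : List (A × O)) (hne : h ≠ []),
      π h = ρ (h.getLast hne).2)
    (V : ℕ → List (A × O) → S → ℝ)
    (hV0 : ∀ h s, V 0 h s = 0)
    (hV : ∀ n h s, V (n + 1) h s =
      ∑ a : A, (π h a).toReal *
        (R s a + γ * ∑ s' : S, (T s a s').toReal *
          ∑ o : O, (Z s' o).toReal * V n (h ++ [(a, o)]) s'))
    (W : ℕ → S → ℝ)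
    (hW0 : ∀ s, W 0 s = 0)
    (hW : ∀ n s, W (n + 1) s =
      ∑ a : A, (ρ (ζ s) a).toReal *
        (R s a + γ * ∑ s' : S, (T s a s').toReal * W n s')) :
    ∀ (n : ℕ) (h : List (A × O)) (hne : h ≠ []) (s : S),
      (h.getLast hne).2 = ζ s → V n h s = W n s :=
  reactive_fully_observable_value_reduction_general T R γ hdet hreactive
    (fun n ↦ funext₂ (hV n)) (fun n ↦ funext (hW n)) fun h _ s _ ↦ (hV0 h s).trans (hW0 s).symm
end

section
/- Proof by example of Theorem 2 (the state value function is a biased estimator of the history value function): in the good/bad POMDP with the reactive last-observation policy and any γ ∈ (0,1), let h be a history whose single observation is good (h = [(a₀, true)] for any action a₀), and let b h be the Bayesian posterior assigning probability 2/3 to the good state and 1/3 to the bad state. Then the true infinite-horizon history value v(h) := lim_{n→∞} Σ_s b h s * V n h s equals (6-γ)/(6(1-γ)), whereas the belief-expectation of the infinite-horizon state values Σ_s b h s * (lim_{n→∞} W n s) equals 5/(6(1-γ)), and these two quantities are not equal; hence v^π(h) ≠ E_{s∼b(h)}[v^π(s)]. -/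
open Filter Topology

/-- Transition kernel of the good/bad POMDP: states deterministically
transition into themselves. -/
noncomputable def gbT : Bool → Bool → PMF Bool := fun s _ => PMF.pure s

/-- Observation kernel of the good/bad POMDP (true = good, false = bad):
the good state always emits the good observation, the bad state emits a
uniformly random observation. -/
noncomputable def gbZ : Bool → PMF Bool := fun s =>
  if s then PMF.pure true else PMF.uniformOfFintype Bool

/-- Reward of the good/bad POMDP: reward 1 exactly when the good action is
chosen. -/
def gbR : Bool → Bool → ℝ := fun _ a => if a then 1 else 0

/-- The reactive last-observation policy: on a nonempty history it
deterministically selects the action equal to the last observation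
(on the empty history it is irrelevant and set arbitrarily). -/
noncomputable def gbPi (h : List (Bool × Bool)) : PMF Bool :=
  match h.getLast? with
  | some p => PMF.pure p.2
  | none => PMF.pure true

/-- n-step history-state value of the reactive last-observation policy in
the good/bad POMDP. -/
noncomputable def gbV (γ : ℝ) : ℕ → List (Bool × Bool) → Bool → ℝ
  | 0, _, _ => 0
  | n + 1, h, s =>
      ∑ a : Bool, (gbPi h a).toReal *
        (gbR s a + γ * ∑ s' : Bool, (gbT s a s').toReal *
          ∑ o : Bool, (gbZ s' o).toReal * gbV γ n (h ++ [(a, o)]) s')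

/-- n-step reactive state value in the good/bad POMDP. -/
noncomputable def gbW (γ : ℝ) : ℕ → Bool → ℝ
  | 0, _ => 0
  | n + 1, s => ∑ o : Bool, (gbZ s o).toReal * (gbR s o + γ * gbW γ n s)

/-- The belief after a single good observation: 2/3 on good, 1/3 on bad. -/
noncomputable def gbBelief : Bool → ℝ := fun s => if s then 2 / 3 else 1 / 3

/-!
The last observation is the only memory of the policy. It fixes the next action, whereas the value
of a state averages over the observation that the state would emit. So after a good observation the
two values agree from the second step on, and they differ only in the first reward: it is `1` on the
history, but on average over a belief `b` it is `b true + b false / 2`. Both limits therefore differ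
by `b false / 2`, whatever the discount factor.
-/

theorem sum_toReal_pmf_eq_one {α : Type*} [Fintype α] (p : PMF α) : ∑ a, (p a).toReal = 1 := by
  have hp : ∑ a, p a = 1 := by simpa only [tsum_fintype] using p.tsum_coe
  rw [← ENNReal.toReal_sum fun a _ => p.apply_ne_top a, hp, ENNReal.toReal_one]

theorem sum_toReal_pure_mul {α : Type*} [Fintype α] (a : α) (f : α → ℝ) :
    ∑ x, (PMF.pure a x).toReal * f x = f a := by
  classical
  simp [PMF.pure_apply, apply_ite ENNReal.toReal]

theorem gbPi_append_singleton (h : List (Bool × Bool)) (a o : Bool) :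
    gbPi (h ++ [(a, o)]) = PMF.pure o := by
  simp [gbPi]

theorem toReal_gbZ_true (s : Bool) : (gbZ s true).toReal = if s then 1 else 1 / 2 := by
  cases s <;> simp [gbZ]

theorem sum_gbZ_mul_gbR (s : Bool) :
    ∑ o, (gbZ s o).toReal * gbR s o = (gbZ s true).toReal := by
  simp [gbR]

theorem gbV_succ_append_singleton (γ : ℝ) (n : ℕ) (h : List (Bool × Bool)) (a o s : Bool) :
    gbV γ (n + 1) (h ++ [(a, o)]) s =
      gbR s o + γ * ∑ o', (gbZ s o').toReal * gbV γ n (h ++ [(a, o)] ++ [(o, o')]) s := by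
  rw [gbV, gbPi_append_singleton, sum_toReal_pure_mul, gbT, sum_toReal_pure_mul]

theorem gbV_succ_append_singleton_eq_gbW (γ : ℝ) (n : ℕ) (h : List (Bool × Bool))
    (a o s : Bool) :
    gbV γ (n + 1) (h ++ [(a, o)]) s = gbR s o + γ * gbW γ n s := by
  induction n generalizing h a o with
  | zero => rw [gbV_succ_append_singleton]; simp [gbV, gbW]
  | succ n ih => simp only [gbV_succ_append_singleton γ (n + 1), ih, gbW]

theorem gbW_succ (γ : ℝ) (n : ℕ) (s : Bool) :
    gbW γ (n + 1) s = (gbZ s true).toReal + γ * gbW γ n s := by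
  simp only [gbW, mul_add, Finset.sum_add_distrib, sum_gbZ_mul_gbR, ← Finset.sum_mul,
    sum_toReal_pmf_eq_one, one_mul]

theorem gbW_eq_mul_geom_sum (γ : ℝ) (n : ℕ) (s : Bool) :
    gbW γ n s = (gbZ s true).toReal * ∑ i ∈ Finset.range n, γ ^ i := by
  induction n with
  | zero => simp [gbW]
  | succ n ih => rw [gbW_succ, ih, geom_sum_succ]; ring

theorem tendsto_gbW {γ : ℝ} (hγ : |γ| < 1) (s : Bool) :
    Tendsto (fun n => gbW γ n s) atTop (𝓝 ((gbZ s true).toReal * (1 - γ)⁻¹)) := by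
  simpa only [gbW_eq_mul_geom_sum] using
    (hasSum_geometric_of_abs_lt_one hγ).tendsto_sum_nat.const_mul (gbZ s true).toReal

theorem tendsto_sum_mul_gbW {γ : ℝ} (hγ : |γ| < 1) {b : Bool → ℝ} (hb : ∑ s, b s = 1) :
    Tendsto (fun n => ∑ s, b s * gbW γ n s) atTop (𝓝 ((2 - b false) / (2 * (1 - γ)))) := by
  have hγ_ne : 1 - γ ≠ 0 := (sub_pos.mpr (abs_lt.mp hγ).2).ne'
  have hb_true : b true = 1 - b false := eq_sub_of_add_eq (by simpa using hb)
  have hval : ∑ s, b s * ((gbZ s true).toReal * (1 - γ)⁻¹) =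
      (2 - b false) / (2 * (1 - γ)) := by
    simp only [Fintype.sum_bool, toReal_gbZ_true, hb_true, if_true, Bool.false_eq_true, if_false]
    field_simp
    ring
  rw [← hval]
  exact tendsto_finsetSum _ fun s _ => (tendsto_gbW hγ s).const_mul (b s)

theorem sum_mul_gbV_succ_append_true (γ : ℝ) {b : Bool → ℝ} (hb : ∑ s, b s = 1) (n : ℕ)
    (h : List (Bool × Bool)) (a : Bool) :
    ∑ s, b s * gbV γ (n + 1) (h ++ [(a, true)]) s = 1 + γ * ∑ s, b s * gbW γ n s := by
  simp only [gbV_succ_append_singleton_eq_gbW, gbR, if_true, mul_add, mul_one,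
    Finset.sum_add_distrib, hb, Finset.mul_sum, mul_left_comm]

theorem tendsto_sum_mul_gbV_append_true {γ : ℝ} (hγ : |γ| < 1) {b : Bool → ℝ}
    (hb : ∑ s, b s = 1) (h : List (Bool × Bool)) (a : Bool) :
    Tendsto (fun n => ∑ s, b s * gbV γ n (h ++ [(a, true)]) s) atTop
      (𝓝 ((2 - γ * b false) / (2 * (1 - γ)))) := by
  have hγ_ne : 1 - γ ≠ 0 := (sub_pos.mpr (abs_lt.mp hγ).2).ne'
  have hval : (2 - γ * b false) / (2 * (1 - γ)) =
      1 + γ * ((2 - b false) / (2 * (1 - γ))) := by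
    field_simp
    ring
  rw [hval, ← tendsto_add_atTop_iff_nat 1]
  simpa only [sum_mul_gbV_succ_append_true γ hb] using
    ((tendsto_sum_mul_gbW hγ hb).const_mul γ).const_add 1

theorem gb_state_values_biased_general {γ : ℝ} (hγ : |γ| < 1) {b : Bool → ℝ}
    (hb : ∑ s, b s = 1) (hb_false : b false ≠ 0) (h : List (Bool × Bool)) (a₀ : Bool) :
    Tendsto (fun n => ∑ s, b s * gbV γ n (h ++ [(a₀, true)]) s)
      atTop (𝓝 ((2 - γ * b false) / (2 * (1 - γ)))) ∧
    Tendsto (fun n => ∑ s, b s * gbW γ n s) atTop (𝓝 ((2 - b false) / (2 * (1 - γ)))) ∧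
    (2 - γ * b false) / (2 * (1 - γ)) ≠ (2 - b false) / (2 * (1 - γ)) := by
  have hγ_ne : 1 - γ ≠ 0 := (sub_pos.mpr (abs_lt.mp hγ).2).ne'
  have hbias : (2 - γ * b false) / (2 * (1 - γ)) - (2 - b false) / (2 * (1 - γ)) =
      b false / 2 := by
    field_simp
    ring
  refine ⟨tendsto_sum_mul_gbV_append_true hγ hb h a₀, tendsto_sum_mul_gbW hγ hb, ?_⟩
  rw [← sub_ne_zero, hbias]
  exact div_ne_zero hb_false two_ne_zero

theorem sum_gbBelief_eq_one : ∑ s, gbBelief s = 1 := by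
  norm_num [gbBelief]

/-- Proof by example of Theorem 2: in the good/bad POMDP, for the history
consisting of a single good observation, the true history value is
(6-γ)/(6(1-γ)), the belief-expectation of the state values is 5/(6(1-γ)),
and the two are unequal: v^π(h) ≠ E_{s∼b(h)}[v^π(s)]. -/
theorem gb_state_values_biased (γ : ℝ) (hγ0 : 0 < γ) (hγ1 : γ < 1)
    (a₀ : Bool) :
    Tendsto (fun n => ∑ s : Bool, gbBelief s * gbV γ n [(a₀, true)] s)
      atTop (nhds ((6 - γ) / (6 * (1 - γ)))) ∧
    Tendsto (fun n => ∑ s : Bool, gbBelief s * gbW γ n s)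
      atTop (nhds (5 / (6 * (1 - γ)))) ∧
    (6 - γ) / (6 * (1 - γ)) ≠ 5 / (6 * (1 - γ)) := by
  have hγ : |γ| < 1 := by rwa [abs_of_pos hγ0]
  have hV : (2 - γ * gbBelief false) / (2 * (1 - γ)) = (6 - γ) / (6 * (1 - γ)) := by
    grind [gbBelief]
  have hW : (2 - gbBelief false) / (2 * (1 - γ)) = 5 / (6 * (1 - γ)) := by
    grind [gbBelief]
  rw [← hV, ← hW]
  exact gb_state_values_biased_general hγ sum_gbBelief_eq_one (by norm_num [gbBelief]) [] a₀
end
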